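/- Let u be a prime play of a Zielonka automaton whose last (maximal) action is b. Then: (i) u is a dom(b)-broadcast; (ii) u is a P-broadcast; (iii) for every Q ⊆ P, u is a Q-broadcast if and only if u is a (P∖Q)-broadcast. -/

import Mathlib

namespace MazTrace

variable {A : Type*}

/-- Smallest equivalence on words over `A` generated by commuting two adjacent
independent letters (`a I b` iff `¬ D a b`). -/
inductive TraceRel (D : A → A → Prop) : List A → List A → Prop
  | refl (u : List A) : TraceRel D u u
  | swap (u v : List A) (a b : A) (h : ¬ D a b) :
      TraceRel D (u ++ a :: b :: v) (u ++ b :: a :: v)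
  | symm {u v : List A} : TraceRel D u v → TraceRel D v u
  | trans {u v w : List A} : TraceRel D u v → TraceRel D v w → TraceRel D u w

theorem TraceRel.append_right {D : A → A → Prop} {u u' : List A} (w : List A)
    (h : TraceRel D u u') : TraceRel D (u ++ w) (u' ++ w) := by
  induction h with
  | refl u => exact .refl _
  | swap x y a b hab =>
      simpa [List.append_assoc] using TraceRel.swap (D := D) x (y ++ w) a b hab
  | symm _ ih => exact ih.symm
  | trans _ _ ih1 ih2 => exact ih1.trans ih2

theorem TraceRel.append_left {D : A → A → Prop} {v v' : List A} (w : List A)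
    (h : TraceRel D v v') : TraceRel D (w ++ v) (w ++ v') := by
  induction h with
  | refl u => exact .refl _
  | swap x y a b hab =>
      simpa [List.append_assoc] using TraceRel.swap (D := D) (w ++ x) y a b hab
  | symm _ ih => exact ih.symm
  | trans _ _ ih1 ih2 => exact ih1.trans ih2

def traceSetoid (D : A → A → Prop) : Setoid (List A) :=
  ⟨TraceRel D, ⟨TraceRel.refl, TraceRel.symm, TraceRel.trans⟩⟩

/-- A Mazurkiewicz trace: an equivalence class of words. -/
def Trace (D : A → A → Prop) : Type _ := Quotient (traceSetoid D)

namespace Trace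

variable {D : A → A → Prop}

/-- The trace of a word. -/
def mk (D : A → A → Prop) (u : List A) : Trace D := Quotient.mk (traceSetoid D) u

/-- The empty trace. -/
instance : One (Trace D) := ⟨mk D []⟩

/-- Concatenation of traces, induced by concatenation of words. -/
instance : Mul (Trace D) :=
  ⟨fun s t => Quotient.liftOn₂ s t (fun u v => mk D (u ++ v))
    (fun _ _ _ _ hu hv =>
      Quotient.sound ((hu.append_right _).trans (TraceRel.append_left _ hv)))⟩

instance : Nonempty (Trace D) := ⟨1⟩

/-- Length of a trace: the length of any of its linearizations. -/
def length (t : Trace D) : ℕ :=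
  Quotient.liftOn t List.length (by
    intro u v h
    induction h with
    | refl u => rfl
    | swap x y a b hab => simp
    | symm _ ih => exact ih.symm
    | trans _ _ ih1 ih2 => exact ih1.trans ih2)

/-- The set of letters of a trace. -/
def alph (t : Trace D) : Set A :=
  Quotient.liftOn t (fun u => {a | a ∈ u}) (by
    intro u v h
    induction h with
    | refl u => rfl
    | swap x y a b hab => ext c; simp [List.mem_append]; tauto
    | symm _ ih => exact ih.symm
    | trans _ _ ih1 ih2 => exact ih1.trans ih2)

/-- Prefix order on traces: `s ⊑ t` iff `s * w = t` for some trace `w`. -/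
def Prefix (s t : Trace D) : Prop := ∃ w, s * w = t

/-- `t I B` : every letter of the trace `t` is independent of every element of `B`. -/
def IndepSet (t : Trace D) (B : Set A) : Prop := ∀ a ∈ t.alph, ∀ b ∈ B, ¬ D a b

/-- `w` is the `B`-view of `t`: the shortest prefix of `t` such that `t = w·v`
for some trace `v` with `v I B`. -/
def IsView (B : Set A) (t w : Trace D) : Prop :=
  (∃ v, w * v = t ∧ v.IndepSet B) ∧
  ∀ w' v', w' * v' = t → v'.IndepSet B → w.length ≤ w'.length

/-- The `B`-view of a trace. -/
noncomputable def view (B : Set A) (t : Trace D) : Trace D :=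
  Classical.epsilon (IsView B t)

/-- A trace is prime if all its linearizations have the same last letter. -/
def IsPrime (t : Trace D) : Prop :=
  ∃ a : A, ∀ u : List A, mk D u = t → u.getLast? = some a

/-- A trace is `b`-prime if every linearization of it ends with the letter `b`. -/
def LastIs (b : A) (t : Trace D) : Prop :=
  ∀ u : List A, mk D u = t → u.getLast? = some b

end Trace

/-- A Zielonka automaton over the actions `A` and the processes `P`:
each process `p` has a finite state set `St p` with an initial state, final states
and a set `acts p` of actions (`A` is covered by the `acts p`); transitions form a
deterministic set of tuples `(a, (q_p)_{p ∈ dom a}, (q'_p)_{p ∈ dom a})`,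
modelled as a partial function `δ`. -/
structure ZAut (A : Type*) (P : Type*) where
  St : P → Type*
  stFinite : ∀ p, Finite (St p)
  init : ∀ p, St p
  final : ∀ p, Set (St p)
  acts : P → Set A
  covers : ∀ a : A, ∃ p, a ∈ acts p
  δ : ∀ a : A, (∀ p : {p : P // a ∈ acts p}, St p.1) →
      Option (∀ p : {p : P // a ∈ acts p}, St p.1)

namespace ZAut

open scoped Classical

variable {A P : Type*} (M : ZAut A P)

/-- The domain of an action: the processes taking part in it. -/
def dom (a : A) : Set P := {p | a ∈ M.acts p}

/-- Two actions are dependent iff their domains intersect. -/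
def Dep (a b : A) : Prop := ∃ p : P, p ∈ M.dom a ∧ p ∈ M.dom b

/-- The domain of a trace: the union of the domains of its letters. -/
def tdom (t : Trace M.Dep) : Set P := {p | ∃ a ∈ t.alph, p ∈ M.dom a}

/-- One step of the automaton on a global state. -/
noncomputable def step (q : ∀ p, M.St p) (a : A) : Option (∀ p, M.St p) :=
  (M.δ a (fun p => q p.1)).map
    (fun q' p => if h : a ∈ M.acts p then q' ⟨p, h⟩ else q p)

/-- The run of the automaton on a word, from the initial global state. -/
noncomputable def runWord (u : List A) : Option (∀ p, M.St p) :=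
  u.foldl (fun oq a => oq.bind (fun q => M.step q a)) (some fun p => M.init p)

/-- The global state `Q(t)` reached after a trace `t` (all linearizations give
the same run). -/
noncomputable def run (t : Trace M.Dep) : Option (∀ p, M.St p) :=
  Classical.epsilon (fun o => ∀ u : List A, Trace.mk M.Dep u = t → M.runWord u = o)

/-- A trace is a play if the automaton can execute it from the initial state. -/
def IsPlay (t : Trace M.Dep) : Prop :=
  ∀ u : List A, Trace.mk M.Dep u = t → (M.runWord u).isSome = true

/-- `a` is a maximal action of `t` : `t = t'·a` for some trace `t'`. -/
def MaxAct (t : Trace M.Dep) (a : A) : Prop :=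
  ∃ t', t = t' * Trace.mk M.Dep [a]

/-- `v I Q` : the domain of every letter of `v` is disjoint from `Q`. -/
def IndepProcs (v : Trace M.Dep) (Q : Set P) : Prop :=
  ∀ b ∈ v.alph, M.dom b ∩ Q = ∅

/-- A `Q`-broadcast: a prime play `u` such that for every play `uv` and every
action `a` maximal in `uv` whose domain meets both `Q` and `P ∖ Q`,
`u ⊑ view_a(uv)`. -/
def Broadcast (Q : Set P) (u : Trace M.Dep) : Prop :=
  u.IsPrime ∧ M.IsPlay u ∧
  ∀ (v : Trace M.Dep) (a : A), M.IsPlay (u * v) → M.MaxAct (u * v) a →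
    (M.dom a ∩ Q).Nonempty → (M.dom a ∩ Qᶜ).Nonempty →
    u.Prefix (Trace.view {a} (u * v))

end ZAut

end MazTrace

namespace MazTrace

variable {A : Type*} {D : A → A → Prop}

/-- `y` has an occurrence of `c` that commutes to its end, leaving a word equivalent to `w`. -/
def EndsIn (D : A → A → Prop) (c : A) (w y : List A) : Prop :=
  ∃ y₁ y₂, y = y₁ ++ c :: y₂ ∧ (∀ d ∈ y₂, ¬ D c d) ∧ TraceRel D (y₁ ++ y₂) w

theorem EndsIn.swap (hD : ∀ a b, D a b → D b a) {c : A} {w : List A} (u v : List A) (a b : A)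
    (h : ¬ D a b) (hy : EndsIn D c w (u ++ a :: b :: v)) :
    EndsIn D c w (u ++ b :: a :: v) := by
  obtain ⟨y₁, y₂, he, hi, ht⟩ := hy
  rcases List.append_eq_append_iff.1 he with ⟨s, rfl, hs⟩ | ⟨s, rfl, hs⟩
  · match s, hs with
    | [], hs =>
      obtain ⟨rfl, rfl⟩ : a = c ∧ b :: v = y₂ := by simpa using hs
      exact ⟨u ++ [b], v, by simp, fun d hd => hi d (by simp [hd]), by simpa using ht⟩
    | [_], hs =>
      obtain ⟨rfl, rfl, rfl⟩ : a = _ ∧ b = c ∧ v = y₂ := by simpa using hs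
      exact ⟨u, a :: v, by simp,
        by simpa using ⟨fun hba => h (hD _ _ hba), hi⟩, by simpa using ht⟩
    | _ :: _ :: s, hs =>
      obtain ⟨rfl, rfl, rfl⟩ : a = _ ∧ b = _ ∧ v = s ++ c :: y₂ := by simpa using hs
      exact ⟨u ++ b :: a :: s, y₂, by simp, hi,
        .trans (by simpa using (TraceRel.swap u (s ++ y₂) a b h).symm) (by simpa using ht)⟩
  · match s, hs with
    | [], hs =>
      obtain ⟨rfl, rfl⟩ : c = a ∧ y₂ = b :: v := by simpa using hs
      exact ⟨y₁ ++ [b], v, by simp, fun d hd => hi d (by simp [hd]), by simpa using ht⟩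
    | _ :: s, hs =>
      obtain ⟨rfl, rfl⟩ : c = _ ∧ y₂ = s ++ a :: b :: v := by simpa using hs
      refine ⟨y₁, s ++ b :: a :: v, by simp, fun d hd => hi d ?_,
        .trans (by simpa using (TraceRel.swap (y₁ ++ s) v a b h).symm) ht⟩
      simp only [List.mem_append, List.mem_cons] at hd ⊢
      tauto

theorem TraceRel.endsIn_iff (hD : ∀ a b, D a b → D b a) {x y : List A} (h : TraceRel D x y)
    (c : A) (w : List A) : EndsIn D c w x ↔ EndsIn D c w y := by
  induction h with
  | refl u => rfl
  | swap u v a b h =>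
    exact ⟨.swap hD u v a b h, .swap hD u v b a fun hba => h (hD _ _ hba)⟩
  | symm _ ih => exact ih.symm
  | trans _ _ ih₁ ih₂ => exact ih₁.trans ih₂

theorem TraceRel.cons_to_end (u v : List A) (c : A) (h : ∀ d ∈ v, ¬ D c d) :
    TraceRel D (u ++ c :: v) (u ++ v ++ [c]) := by
  induction v generalizing u with
  | nil => simpa using TraceRel.refl _
  | cons d v ih =>
    refine (TraceRel.swap u v c d (h d (by simp))).trans ?_
    simpa using ih (u ++ [d]) fun e he => h e (by simp [he])

namespace Trace

theorem mk_eq_mk {u v : List A} : mk D u = mk D v ↔ TraceRel D u v :=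
  ⟨fun h => Quotient.exact h, fun h => Quotient.sound h⟩

theorem exists_mk (t : Trace D) : ∃ u, mk D u = t := Quotient.exists_rep t

/-- A word starting with a `b`-prime trace still starts with it after deleting
final letters different from `b`. -/
theorem LastIs.exists_append (hD : ∀ a b, D a b → D b a) {b : A} {u : List A}
    (hu : LastIs b (mk D u)) {z : List A} (hz : b ∉ z) {v w : List A}
    (h : TraceRel D (u ++ v) (w ++ z)) : ∃ r, TraceRel D (u ++ r) w := by
  induction z using List.reverseRecOn generalizing v with
  | nil => exact ⟨v, by simpa using h⟩
  | append_singleton z c ih =>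
    obtain ⟨hbz, hbc⟩ : b ∉ z ∧ b ≠ c := by simpa using hz
    obtain ⟨y₁, y₂, he, hi, ht⟩ : EndsIn D c (w ++ z) (u ++ v) :=
      (h.endsIn_iff hD c _).2 ⟨w ++ z, [], by simp, by simp, by simpa using TraceRel.refl _⟩
    rcases List.append_eq_append_iff.1 he with ⟨s, rfl, rfl⟩ | ⟨s, rfl, hs⟩
    · exact ih hbz (v := s ++ y₂) (by simpa using ht)
    · match s, hs with
      | [], hs => exact ih hbz (v := y₂) (by simpa using ht)
      | _ :: s, hs =>
        obtain ⟨rfl, rfl⟩ : c = _ ∧ y₂ = s ++ v := by simpa using hs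
        have hlast := hu _ (mk_eq_mk.2
          (TraceRel.cons_to_end y₁ s c fun d hd => hi d (by simp [hd])).symm)
        exact absurd (by simpa using hlast) hbc.symm

theorem isView_view (B : Set A) (t : Trace D) : IsView B t (view B t) := by
  refine Classical.epsilon_spec (p := IsView B t) ?_
  let S : Set (Trace D) := {w | ∃ v, w * v = t ∧ v.IndepSet B}
  have hS : S.Nonempty := by
    obtain ⟨x, rfl⟩ := exists_mk t
    exact ⟨mk D x, mk D [], congrArg (mk D) (List.append_nil x), fun a ha => by cases ha⟩
  obtain ⟨w, hw, hmin⟩ := (measure (length (D := D))).wf.has_min S hS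
  exact ⟨w, hw, fun w' v' h hv => not_lt.1 (hmin w' ⟨v', h, hv⟩)⟩

theorem LastIs.prefix_view (hD : ∀ a b, D a b → D b a) {b : A} {u : Trace D}
    (hu : LastIs b u) (v : Trace D) {B : Set A} {a : A} (ha : a ∈ B) (hba : D b a) :
    u.Prefix (view B (u * v)) := by
  obtain ⟨⟨z, hz, hzB⟩, -⟩ := isView_view B (u * v)
  generalize view B (u * v) = w at hz
  obtain ⟨u, rfl⟩ := exists_mk u
  obtain ⟨v, rfl⟩ := exists_mk v
  obtain ⟨w, rfl⟩ := exists_mk w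
  obtain ⟨z, rfl⟩ := exists_mk z
  obtain ⟨r, hr⟩ := hu.exists_append hD (fun hb => hzB b hb a ha hba) (mk_eq_mk.1 hz.symm)
  exact ⟨mk D r, mk_eq_mk.2 hr⟩

theorem IsPrime.lastIs {b : A} {u t : Trace D} (hu : u.IsPrime) (h : u = t * mk D [b]) :
    LastIs b u := by
  obtain ⟨c, hc⟩ := hu
  obtain ⟨x, rfl⟩ := exists_mk t
  obtain rfl : b = c := by simpa using hc (x ++ [b]) h.symm
  exact hc

end Trace

namespace ZAut

variable {P : Type*} {M : ZAut A P}

theorem Dep.symm {a b : A} : M.Dep a b → M.Dep b a := fun ⟨p, ha, hb⟩ => ⟨p, hb, ha⟩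

theorem Broadcast.compl {Q : Set P} {u : Trace M.Dep} (h : M.Broadcast Q u) :
    M.Broadcast Qᶜ u :=
  ⟨h.1, h.2.1, fun v a hp hm hQ hQc => h.2.2 v a hp hm (by rwa [compl_compl] at hQc) hQ⟩

end ZAut

end MazTrace

open MazTrace in
/-- Let `u` be a prime play whose last (maximal) action is `b`. Then `u` is a
`dom(b)`-broadcast, a `P`-broadcast, and for every `Q ⊆ P`, `u` is a
`Q`-broadcast iff it is a `(P ∖ Q)`-broadcast. -/
theorem broadcast_basic {A P : Type*} [Finite A] [Finite P] (M : ZAut A P)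
    (u : Trace M.Dep) (b : A)
    (hprime : u.IsPrime) (hplay : M.IsPlay u) (hmax : M.MaxAct u b) :
    M.Broadcast (M.dom b) u ∧ M.Broadcast (Set.univ : Set P) u ∧
      ∀ Q : Set P, (M.Broadcast Q u ↔ M.Broadcast Qᶜ u) := by
  obtain ⟨t, ht⟩ := hmax
  refine ⟨⟨hprime, hplay, fun v a _ _ ⟨p, hpa, hpb⟩ _ => ?_⟩,
    ⟨hprime, hplay, fun v a _ _ _ hne => ?_⟩, fun Q => ⟨.compl, fun h => ?_⟩⟩
  · exact (hprime.lastIs ht).prefix_view (fun _ _ => ZAut.Dep.symm) v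
      (Set.mem_singleton a) ⟨p, hpb, hpa⟩
  · simp at hne
  · simpa using h.compl
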